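/- In a DAG G, for any vertex V, the set nd(V) of non-descendants of V other than V (vertices W ≠ V such that V is not an ancestor of W) is backward-t-separated from {V} by the empty set. -/

import Mathlib

/-!
If `X` is ancestral, the top of a backward trek from `X` to `Y`, being an ancestor of the end in
`X`, lies in `X` too. If the top is the other end, `X` meets `Y`; if it is neither end, it keeps the
trek from being proper. And `nd(v)` is ancestral: a descendant of `v` has only descendants below it.
-/

variable {V : Type*}

/-- `p` is (the list of vertices of) a directed path from `i` to `j` in the graph with
edge relation `E`: consecutive vertices are joined by edges, and the path has at least
one edge. -/
def IsDirPath (E : V → V → Prop) (p : List V) (i j : V) : Prop :=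
  p.Chain' E ∧ p.head? = some i ∧ p.getLast? = some j ∧ 2 ≤ p.length

/-- The graph is acyclic: no directed cycle. -/
def Acyclic (E : V → V → Prop) : Prop := ∀ v, ¬ Relation.TransGen E v v

/-- `v` is an ancestor of `w`: `v = w` or there is a directed path from `v` to `w`. -/
def Ancestor (E : V → V → Prop) (v w : V) : Prop := Relation.ReflTransGen E v w

/-- A forward trek from `i` to `j` is a directed path from `i` to `j`; `p` lists its vertices. -/
def IsFwdTrek (E : V → V → Prop) (p : List V) (i j : V) : Prop := IsDirPath E p i j

/-- A backward trek from `i` to `j` is a directed path from `j` to `i`, or a union of two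
directed paths from a common vertex `k` (distinct from `i` and `j`) to `i` and to `j`,
disjoint except at `k`; `p` lists its vertices. -/
def IsBwdTrek (E : V → V → Prop) (p : List V) (i j : V) : Prop :=
  IsDirPath E p j i ∨
    ∃ (k : V) (q r : List V), k ≠ i ∧ k ≠ j ∧ IsDirPath E q k i ∧ IsDirPath E r k j ∧
      (∀ x, x ∈ q → x ∈ r → x = k) ∧ p = q ++ r

/-- A proper forward trek from `X` to `Y`: a forward trek from some `i ∈ X` to some `j ∈ Y`
containing no vertex of `X ∪ Y` other than `i` and `j`. -/
def ProperFwdTrek (E : V → V → Prop) (X Y : Set V) (p : List V) : Prop :=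
  ∃ i ∈ X, ∃ j ∈ Y, IsFwdTrek E p i j ∧ ∀ x ∈ p, x ∈ X ∪ Y → x = i ∨ x = j

/-- A proper backward trek from `X` to `Y`. -/
def ProperBwdTrek (E : V → V → Prop) (X Y : Set V) (p : List V) : Prop :=
  ∃ i ∈ X, ∃ j ∈ Y, IsBwdTrek E p i j ∧ ∀ x ∈ p, x ∈ X ∪ Y → x = i ∨ x = j

/-- `X` is forward-t-separated from `Y` by `Z`: every proper forward trek from `X` to `Y`
contains a vertex of `Z`. -/
def FwdTSep (E : V → V → Prop) (X Y Z : Set V) : Prop :=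
  ∀ p, ProperFwdTrek E X Y p → ∃ z ∈ Z, z ∈ p

/-- `X` is backward-t-separated from `Y` by `Z`: every proper backward trek from `X` to `Y`
contains a vertex of `Z`. -/
def BwdTSep (E : V → V → Prop) (X Y Z : Set V) : Prop :=
  ∀ p, ProperBwdTrek E X Y p → ∃ z ∈ Z, z ∈ p

/-- `X` and `Y` are t-separated by `Z`: both forward- and backward-t-separation hold. -/
def TSep (E : V → V → Prop) (X Y Z : Set V) : Prop :=
  FwdTSep E X Y Z ∧ BwdTSep E X Y Z

/-- A set of vertices is ancestral if it contains every ancestor of each of its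
vertices; no proper backward trek leads from such a set to one disjoint from it. -/
def IsAncestral (E : V → V → Prop) (X : Set V) : Prop :=
  ∀ ⦃a b⦄, Ancestor E a b → b ∈ X → a ∈ X

namespace IsDirPath

variable {E : V → V → Prop} {p : List V} {i j : V}

theorem source_mem (h : IsDirPath E p i j) : i ∈ p :=
  List.mem_of_mem_head? h.2.1

theorem ancestor (h : IsDirPath E p i j) : Ancestor E i j := by
  obtain ⟨hchain, hhead, hlast, -⟩ := h
  have hne : p ≠ [] := List.ne_nil_of_mem (List.mem_of_mem_head? hhead)
  obtain rfl : p.head hne = i := List.head_of_mem_head? hhead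
  obtain rfl : p.getLast hne = j := List.getLast_of_mem_getLast? hlast
  exact List.relationReflTransGen_of_exists_isChain p hchain hne

end IsDirPath

theorem IsAncestral.bwdTSep_empty {E : V → V → Prop} {X Y : Set V} (hX : IsAncestral E X)
    (hXY : Disjoint X Y) : BwdTSep E X Y ∅ := by
  rintro p ⟨i, hi, j, hj, htrek, hproper⟩
  exfalso
  rcases htrek with hji | ⟨k, q, r, hki, hkj, hq, -, -, rfl⟩
  · exact hXY.notMem_of_mem_left (hX hji.ancestor hi) hj
  · have hkX : k ∈ X := hX hq.ancestor hi
    have hk : k = i ∨ k = j :=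
      hproper k (List.mem_append_left r hq.source_mem) (Or.inl hkX)
    exact hk.elim hki hkj

theorem isAncestral_nonDescendants (E : V → V → Prop) (v : V) :
    IsAncestral E {w | w ≠ v ∧ ¬ Ancestor E v w} := by
  rintro a b hab ⟨-, hvb⟩
  refine ⟨?_, fun hva => hvb (hva.trans hab)⟩
  rintro rfl
  exact hvb hab

theorem nonDescendants_bwdTSep_empty_general (E : V → V → Prop) (v : V) :
    BwdTSep E {w | w ≠ v ∧ ¬ Ancestor E v w} {v} ∅ :=
  (isAncestral_nonDescendants E v).bwdTSep_empty
    (Set.disjoint_singleton_right.mpr fun hv => hv.1 rfl)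

/-- In a DAG, the set `nd(v)` of non-descendants of `v` (other than `v`) is
backward-t-separated from `{v}` by the empty set. -/
theorem nonDescendants_bwdTSep_empty (E : V → V → Prop) (hacyc : Acyclic E) (v : V) :
    BwdTSep E {w | w ≠ v ∧ ¬ Ancestor E v w} {v} ∅ :=
  nonDescendants_bwdTSep_empty_general E v
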